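/- Let C ⊆ V be a set of controllable vertices. Then every C-equivalence class U ⊆ N(C) is jointly controllable, i.e. ∑_{v∈U} ∂_{p_v} ∈ 𝓜. -/

import Mathlib

/-!
Let `S` be the space of tuples `F = (F_v)` of real polynomials with `∑_v F_v(q_v) ∂_{p_v} ∈ 𝓜`.
Bracketing twice gives `[[∑_v F_v ∂_{p_v}, X₀], ∑_v H_v ∂_{p_v}] = ∑_v (F_v H_v)' ∂_{p_v}`, so `S`
is closed under the symmetric product `(F, H) ↦ (F H)'`. The functions `α` on `V` with `α S ⊆ S`
form a subalgebra `A` of the functions on a finite set; by Lagrange interpolation `A` contains the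
indicators of the level sets of its elements.

For `c ∈ C`, the bracket `[∂_{q_c}, X₀]`, freed from its components at controllable vertices, is
`∑_v Q_v(q_v - q_c) ∂_{p_v}` with `Q_v = V''_{vc}`, summed over the neighbours `v ∉ C` of `c`.
Brackets with `∂_{q_c}` differentiate `Q`, and Taylor's formula, with powers of `q_c` as smooth
coefficients, replaces `q_v - q_c` by `q_v`. Hence all derivatives of the tuple `Q` lie in `S`.

For such a tuple, the indicators of the classes of the `Q_v` modulo translation belong to `A`. Let
`B` be the set of vertices where `Q` has maximal degree, and `m_v` the mean of the roots of `Q_v`.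
The symmetric square of the last nonconstant derivative of `Q` yields the tuple `1_B (X - m)`. The
operator `G ↦ (1_B (X - m) G)'` is diagonal in the powers of `X - m`, so `S` contains the
homogeneous parts of `Q` about `m` on `B`, and symmetric products place their coefficients in `A`.
These coefficients determine the classes, and removing `B` one proceeds by induction on the
degree.

The indicator of a `C`-equivalence class is the product of such indicators over `c ∈ C`. Applied
to the top derivative of the tuple `Q` of one `c ∈ C`, it gives the constant tuple of the class.
-/

open scoped Classical
open Polynomial

noncomputable section

/-- Phase space ℝ^{2|V|}: positions `q = x.1` and momenta `p = x.2`. -/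
abbrev Phase (V : Type) := (V → ℝ) × (V → ℝ)

/-- Lie bracket of vector fields: `[Y,Z](x) = DZ(x)·Y(x) − DY(x)·Z(x)`. -/
def lieB {V : Type} [Fintype V] (Y Z : Phase V → Phase V) : Phase V → Phase V :=
  fun x => fderiv ℝ Z x (Y x) - fderiv ℝ Y x (Z x)

/-- The constant vector field `∂_{p_v}`. -/
def dp {V : Type} [Fintype V] [DecidableEq V] (v : V) : Phase V → Phase V :=
  fun _ => (0, Pi.single v 1)

/-- The constant vector field `∂_{q_v}`. -/
def dq {V : Type} [Fintype V] [DecidableEq V] (v : V) : Phase V → Phase V :=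
  fun _ => (Pi.single v 1, 0)

/-- The constant vector field `∑_{v ∈ A} ∂_{p_v}`. -/
def dpSum {V : Type} [Fintype V] [DecidableEq V] (A : Finset V) : Phase V → Phase V :=
  fun _ => (0, ∑ v ∈ A, Pi.single v 1)

/-- The constant vector field `∑_{v ∈ A} ∂_{q_v}`. -/
def dqSum {V : Type} [Fintype V] [DecidableEq V] (A : Finset V) : Phase V → Phase V :=
  fun _ => (∑ v ∈ A, Pi.single v 1, 0)

/-- The drift vector field
`X₀ = −∑_{v∈V*} γ_v p_v ∂_{p_v} + ∑_{v∈V} (p_v ∂_{q_v} − U_v'(q_v) ∂_{p_v})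
      − ∑_{{u,v}∈E} V_{uv}'(q_u − q_v)(∂_{p_u} − ∂_{p_v})`,
written componentwise (using the symmetry `V_{vu}(x) = V_{uv}(−x)` of the
interaction potentials, the `∂_{p_v}`-component of the edge term at a vertex `v` is
`−∑_{w ~ v} V_{vw}'(q_v − q_w)`). -/
def X0 {V : Type} [Fintype V] [DecidableEq V] (G : SimpleGraph V) [DecidableRel G.Adj]
    (γ : V → ℝ) (U : V → ℝ → ℝ) (Vp : V → V → Polynomial ℝ) : Phase V → Phase V :=
  fun x =>
    (x.2, fun v =>
      -(γ v) * x.2 v - deriv (U v) (x.1 v) -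
        ∑ w ∈ Finset.univ.filter (fun w => G.Adj v w),
          (derivative (Vp v w)).eval (x.1 v - x.1 w))

/-- The smallest collection `𝓜` of vector fields on `ℝ^{2|V|}` that contains `∂_{p_v}`
for every `v ∈ V*`, and is closed under linear combinations, Lie brackets,
bracketing with `X₀`, and multiplication by smooth scalar functions. -/
inductive MM {V : Type} [Fintype V] [DecidableEq V] (Vstar : Finset V)
    (X₀ : Phase V → Phase V) : (Phase V → Phase V) → Prop
  | basic (v : V) (hv : v ∈ Vstar) : MM Vstar X₀ (dp v)
  | add {Y Z : Phase V → Phase V} : MM Vstar X₀ Y → MM Vstar X₀ Z → MM Vstar X₀ (Y + Z)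
  | smul (a : ℝ) {Y : Phase V → Phase V} : MM Vstar X₀ Y → MM Vstar X₀ (a • Y)
  | lie {Y Z : Phase V → Phase V} : MM Vstar X₀ Y → MM Vstar X₀ Z → MM Vstar X₀ (lieB Y Z)
  | lieX {Y : Phase V → Phase V} : MM Vstar X₀ Y → MM Vstar X₀ (lieB Y X₀)
  | mulS (f : Phase V → ℝ) (hf : ContDiff ℝ (⊤ : ℕ∞) f) {Y : Phase V → Phase V} :
      MM Vstar X₀ Y → MM Vstar X₀ (fun x => f x • Y x)

/-- A vertex `v` is controllable if `∂_{q_v} ∈ 𝓜` and `∂_{p_v} ∈ 𝓜`. -/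
def Controllable {V : Type} [Fintype V] [DecidableEq V] (Vstar : Finset V)
    (X₀ : Phase V → Phase V) (v : V) : Prop :=
  MM Vstar X₀ (dq v) ∧ MM Vstar X₀ (dp v)

/-- Two polynomials are equivalent if `f(·) = g(· + δ)` for some `δ ∈ ℝ`. -/
def PolyEquiv (f g : Polynomial ℝ) : Prop :=
  ∃ δ : ℝ, ∀ x : ℝ, f.eval x = g.eval (x + δ)

/-- `N(C)`: the set of vertices not in `C` having at least one neighbor in `C`. -/
def NC {V : Type} [Fintype V] [DecidableEq V] (G : SimpleGraph V) [DecidableRel G.Adj]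
    (C : Finset V) : Finset V :=
  Finset.univ.filter fun v => v ∉ C ∧ ∃ c ∈ C, G.Adj c v

/-- `v` and `w` are `C`-equivalent: they are `C`-siblings (connected to `C` in exactly
the same way) and for each `c ∈ C` adjacent to both, the polynomials `V''_{cv}` and
`V''_{cw}` are equivalent. -/
def CEquiv {V : Type} (G : SimpleGraph V) (Vp : V → V → Polynomial ℝ) (C : Finset V)
    (v w : V) : Prop :=
  (∀ c ∈ C, G.Adj c v ↔ G.Adj c w) ∧
  (∀ c ∈ C, G.Adj c v → G.Adj c w →
    PolyEquiv (derivative (derivative (Vp c v))) (derivative (derivative (Vp c w))))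

/-! ### Multiplier algebras -/

/-- The subalgebra of those `a : A` whose action on the `A`-module `M` preserves the `R`-submodule
`S`. -/
def multiplierAlgebra {R M : Type*} (A : Type*) [CommSemiring R] [Semiring A] [Algebra R A]
    [AddCommMonoid M] [Module R M] [Module A M] [IsScalarTower R A M] (S : Submodule R M) :
    Subalgebra R A where
  carrier := {a | ∀ x ∈ S, a • x ∈ S}
  mul_mem' ha hb x hx := by simpa only [mul_smul] using ha _ (hb x hx)
  add_mem' ha hb x hx := by simpa only [add_smul] using S.add_mem (ha x hx) (hb x hx)
  algebraMap_mem' r x hx := by simpa only [algebraMap_smul] using S.smul_mem r hx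

lemma sum_smul_mem_of_eigenvectors {K M ι : Type*} [Field K] [AddCommGroup M] [Module K M]
    {S : Submodule K M} {E : Module.End K M} (hE : E ∈ multiplierAlgebra (Module.End K M) S)
    {s : Finset ι} {F : ι → M} {μ : ι → K} (hF : ∀ i ∈ s, E (F i) = μ i • F i)
    (hsum : ∑ i ∈ s, F i ∈ S) (f : K → K) :
    ∑ i ∈ s, f (μ i) • F i ∈ S := by
  set P := Lagrange.interpolate (s.image μ) id f
  have hP : ∀ i ∈ s, P.eval (μ i) = f (μ i) := fun i hi ↦
    Lagrange.eval_interpolate_at_node f Function.injective_id.injOn (Finset.mem_image_of_mem μ hi)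
  have hPE : aeval E P ∈ multiplierAlgebra (Module.End K M) S :=
    Algebra.adjoin_le (by simpa using hE) (aeval_mem_adjoin_singleton K E)
  convert hPE _ hsum using 1
  rw [Module.End.smul_def, map_sum]
  refine Finset.sum_congr rfl fun i hi ↦ ?_
  rw [Module.End.aeval_apply_of_mem_apply_eq_smul (hF i hi), hP i hi]

section FunctionAlgebra

variable {K V : Type*} [Field K] {A : Subalgebra K (V → K)}

lemma comp_mem_of_mem_subalgebra [Finite V] {α : V → K} (hα : α ∈ A) (f : K → K) :
    f ∘ α ∈ A := by
  have := Fintype.ofFinite V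
  set P := Lagrange.interpolate (Finset.univ.image α) id f
  have hP : ∀ v, P.eval (α v) = f (α v) := fun v ↦
    Lagrange.eval_interpolate_at_node f Function.injective_id.injOn
      (Finset.mem_image_of_mem α (Finset.mem_univ v))
  have hPα : aeval α P = f ∘ α := by ext v; simp [hP]
  exact hPα ▸ Algebra.adjoin_le (by simpa using hα) (aeval_mem_adjoin_singleton K α)

lemma indicator_fiber_mem [Finite V] {α : V → K} (hα : α ∈ A) (a : K) :
    {v | α v = a}.indicator 1 ∈ A :=
  comp_mem_of_mem_subalgebra hα (({a} : Set K).indicator 1)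

lemma indicator_inter_mem {B D : Set V} (hB : B.indicator 1 ∈ A) (hD : D.indicator 1 ∈ A) :
    (B ∩ D).indicator 1 ∈ A := by
  rw [Set.inter_indicator_one]
  exact A.mul_mem hB hD

lemma indicator_biInter_mem {κ : Type*} (s : Finset κ) {B : κ → Set V}
    (hB : ∀ k ∈ s, (B k).indicator 1 ∈ A) : (⋂ k ∈ s, B k).indicator 1 ∈ A := by
  induction s using Finset.induction_on with
  | empty => simp
  | insert k s _ ih =>
    rw [Finset.set_biInter_insert]
    exact indicator_inter_mem (hB k (by simp)) (ih fun j hj ↦ hB j (by simp [hj]))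

end FunctionAlgebra

/-! ### Translation classes of polynomials -/

section Depressed

variable {K : Type*} [Field K]

lemma iterate_derivative_eq_C_of_natDegree_le {p : K[X]} {n : ℕ} (hp : p.natDegree ≤ n) :
    derivative^[n] p = C (n.factorial * p.coeff n) := by
  have hdeg : (derivative^[n] p).natDegree = 0 := by
    have := natDegree_iterate_derivative p n
    omega
  rw [eq_C_of_natDegree_eq_zero hdeg, coeff_iterate_derivative, zero_add, Nat.descFactorial_self,
    nsmul_eq_mul]

/-- The mean of the roots (in a splitting field) of a nonconstant polynomial, with value `0` for
constants. -/
def rootMean (p : K[X]) : K := -p.nextCoeff / (p.natDegree * p.leadingCoeff)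

/-- The Tschirnhaus normal form of a polynomial: its translate with root mean zero. It is used as a
complete invariant of polynomials modulo translation. -/
def depressed (p : K[X]) : K[X] := taylor (rootMean p) p

@[simp] lemma natDegree_depressed (p : K[X]) : (depressed p).natDegree = p.natDegree :=
  natDegree_taylor _ _

lemma depressed_eq_zero_iff {p : K[X]} : depressed p = 0 ↔ p = 0 := taylor_eq_zero _ _

lemma coeff_taylor_of_natDegree_eq_succ {p : K[X]} {d : ℕ} (hp : p.natDegree = d + 1) (r : K) :
    (taylor r p).coeff d = p.coeff d + (d + 1) * p.coeff (d + 1) * r := by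
  have hdeg : (hasseDeriv d p).natDegree < 2 := by
    have := natDegree_hasseDeriv_le p d
    omega
  rw [taylor_coeff, eval_eq_sum_range' hdeg]
  simp [Finset.sum_range_succ, hasseDeriv_coeff, add_comm 1 d]

variable [CharZero K]

lemma nextCoeff_eq_rootMean (p : K[X]) :
    p.nextCoeff = -(p.natDegree * p.leadingCoeff * rootMean p) := by
  by_cases hp : p.natDegree = 0
  · simp [nextCoeff, hp]
  · have hp0 : p ≠ 0 := by rintro rfl; simp at hp
    have : p.leadingCoeff ≠ 0 := leadingCoeff_ne_zero.2 hp0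
    rw [rootMean]
    field_simp

lemma rootMean_taylor {p : K[X]} (hp : p.natDegree ≠ 0) (r : K) :
    rootMean (taylor r p) = rootMean p - r := by
  obtain ⟨d, hd⟩ := Nat.exists_eq_succ_of_ne_zero hp
  have hlead : p.leadingCoeff ≠ 0 := leadingCoeff_ne_zero.2 (by rintro rfl; simp at hp)
  have hnext : (taylor r p).nextCoeff = p.nextCoeff + p.natDegree * p.leadingCoeff * r := by
    rw [nextCoeff_of_natDegree_pos (by rw [natDegree_taylor]; omega),
      nextCoeff_of_natDegree_pos (by omega), natDegree_taylor, leadingCoeff, hd,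
      Nat.succ_sub_one, coeff_taylor_of_natDegree_eq_succ hd]
    simp
  rw [rootMean, rootMean, hnext, natDegree_taylor, leadingCoeff_taylor]
  field_simp
  ring

lemma depressed_taylor (p : K[X]) (r : K) : depressed (taylor r p) = depressed p := by
  by_cases hp : p.natDegree = 0
  · rw [eq_C_of_natDegree_eq_zero hp, taylor_C]
  · rw [depressed, rootMean_taylor hp, taylor_taylor, sub_add_cancel, depressed]

lemma depressed_eq_depressed_iff {p q : K[X]} :
    depressed p = depressed q ↔ ∃ δ, p = taylor δ q := by
  constructor
  · intro h
    refine ⟨-rootMean p + rootMean q, ?_⟩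
    have := congrArg (taylor (-rootMean p)) h
    simpa only [depressed, taylor_taylor, neg_add_cancel, taylor_zero] using this
  · rintro ⟨δ, rfl⟩
    exact depressed_taylor q δ

lemma coeff_depressed_eq_zero {p : K[X]} {d : ℕ} (hp : p.natDegree = d + 1) :
    (depressed p).coeff d = 0 := by
  have hnext := nextCoeff_eq_rootMean p
  rw [nextCoeff_of_natDegree_pos (by omega), leadingCoeff, hp, Nat.add_sub_cancel] at hnext
  rw [depressed, coeff_taylor_of_natDegree_eq_succ hp, hnext]
  push_cast
  ring

lemma iterate_derivative_eq_mul_X_sub_C_rootMean {p : K[X]} {d : ℕ} (hp : p.natDegree = d + 1) :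
    derivative^[d] p = derivative^[d + 1] p * (X - C (rootMean p)) := by
  have hnext := nextCoeff_eq_rootMean p
  rw [nextCoeff_of_natDegree_pos (by omega), leadingCoeff, hp, Nat.add_sub_cancel] at hnext
  have hdeg : (derivative^[d] p).natDegree ≤ 1 :=
    (natDegree_iterate_derivative _ _).trans (by omega)
  have hfactorial : (d + 1).descFactorial d = (d + 1).factorial := by
    simpa using Nat.factorial_mul_descFactorial (Nat.le_succ d)
  rw [iterate_derivative_eq_C_of_natDegree_le hp.le, eq_X_add_C_of_natDegree_le_one hdeg,
    coeff_iterate_derivative, coeff_iterate_derivative, zero_add, hnext, add_comm 1 d,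
    Nat.descFactorial_self, hfactorial, Nat.factorial_succ]
  simp only [nsmul_eq_mul, C_mul, C_neg, map_natCast]
  push_cast
  ring

end Depressed

/-! ### Spaces of tuples closed under the symmetric product -/

section SymmetricProduct

variable {K V : Type*} [Field K]

/-- The symmetric product `(F, G) ↦ (F G)'` of tuples of polynomials, as an operator acting
on `G`. -/
def symProd (F : V → K[X]) : Module.End K (V → K[X]) :=
  derivative.compLeft V ∘ₗ LinearMap.mulLeft K F

lemma symProd_apply (F G : V → K[X]) (v : V) : symProd F G v = derivative (F v * G v) := rfl

/-- Spaces of tuples of polynomials that are closed under the symmetric product. -/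
def SymClosed (S : Submodule K (V → K[X])) : Prop := ∀ F ∈ S, ∀ G ∈ S, symProd F G ∈ S

/-- The tuple `v ↦ α_v (X - m_v) ^ k`, homogeneous of degree `k` about the centres `m`. -/
def centeredMonomial (m : V → K) (k : ℕ) (α : V → K) : V → K[X] :=
  fun v ↦ C (α v) * (X - C (m v)) ^ k

lemma symProd_centeredMonomial (m : V → K) (k l : ℕ) (α β : V → K) :
    symProd (centeredMonomial m k α) (centeredMonomial m l β) =
      ((k + l : ℕ) : K) • centeredMonomial m (k + l - 1) (α * β) := by
  ext1 v
  have hmul : centeredMonomial m k α v * centeredMonomial m l β v =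
      C (α v * β v) * (X - C (m v)) ^ (k + l) := by
    simp only [centeredMonomial, C_mul, pow_add]
    ring
  rw [symProd_apply, hmul, derivative_C_mul, derivative_X_sub_C_pow]
  simp only [Pi.smul_apply, centeredMonomial, Pi.mul_apply, smul_eq_C_mul, map_natCast]
  ring

/-- The constants to which the `n`-th derivatives of a tuple of polynomials of degree at most `n`
are equal. -/
def topDerivative (Q : V → K[X]) (n : ℕ) : V → K := fun v ↦ n.factorial * (Q v).coeff n

lemma support_topDerivative [CharZero K] {Q : V → K[X]} {d : ℕ}
    (hd : ∀ v, (Q v).natDegree ≤ d + 1) :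
    (topDerivative Q (d + 1)).support = {v | (Q v).natDegree = d + 1} := by
  ext v
  rw [Function.mem_support, topDerivative,
    mul_ne_zero_iff_left (Nat.cast_ne_zero.2 (Nat.factorial_ne_zero _))]
  exact ⟨fun h ↦ (hd v).antisymm (le_natDegree_of_ne_zero h),
    coeff_ne_zero_of_eq_degree ∘ (degree_eq_iff_natDegree_eq_of_pos d.succ_pos).2⟩

variable {S : Submodule K (V → K[X])} {m α β : V → K} {F : V → K[X]} {B : Set V}

lemma SymClosed.centeredMonomial_mul_mem [CharZero K] (hS : SymClosed S) {k l n : ℕ}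
    (hkl : k + l = n + 1) (hα : centeredMonomial m k α ∈ S) (hβ : centeredMonomial m l β ∈ S) :
    centeredMonomial m n (α * β) ∈ S := by
  have h := S.smul_mem ((n + 1 : ℕ) : K)⁻¹ (hS _ hα _ hβ)
  rwa [symProd_centeredMonomial, hkl, inv_smul_smul₀ (Nat.cast_ne_zero.2 n.succ_ne_zero)] at h

variable [Finite V]

/-- On the part of degree `k` about `m_v` of the component at `v`, the operator
`G ↦ (α (X - m) G)'` acts as multiplication by `(k + 1) α_v`. -/
lemma SymClosed.functional_calculus_mem (hS : SymClosed S) (hα : centeredMonomial m 1 α ∈ S)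
    (hF : F ∈ S) (f : K → K) :
    (fun v ↦ (taylor (m v) (F v)).sum fun k a ↦
      C (f ((k + 1) * α v) * a) * (X - C (m v)) ^ k) ∈ S := by
  have := Fintype.ofFinite V
  obtain ⟨n, hn⟩ : ∃ n, ∀ v, (taylor (m v) (F v)).natDegree < n :=
    ⟨_, fun v ↦ Nat.lt_succ_of_le (Finset.le_sup (f := fun v ↦ (taylor (m v) (F v)).natDegree)
      (Finset.mem_univ v))⟩
  let part (i : V × ℕ) : V → K[X] :=
    Pi.single i.1 (C ((taylor (m i.1) (F i.1)).coeff i.2) * (X - C (m i.1)) ^ i.2)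
  have hpart (i : V × ℕ) :
      symProd (centeredMonomial m 1 α) (part i) = ((i.2 + 1) * α i.1) • part i := by
    ext1 w
    by_cases hw : w = i.1
    · subst hw
      have := congrFun (symProd_centeredMonomial m 1 i.2 α
        fun _ ↦ (taylor (m i.1) (F i.1)).coeff i.2) i.1
      rw [add_tsub_cancel_left, add_comm 1 i.2] at this
      simpa [symProd_apply, part, centeredMonomial, smul_eq_C_mul, mul_assoc] using this
    · simp [symProd_apply, part, hw]
  have hsum (g : V × ℕ → K) : ∑ i ∈ Finset.univ ×ˢ Finset.range n, g i • part i =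
      fun v ↦ (taylor (m v) (F v)).sum fun k a ↦ C (g (v, k) * a) * (X - C (m v)) ^ k := by
    ext1 v
    rw [Polynomial.sum_over_range' _ (by simp) n (hn v), Finset.sum_product_right,
      Finset.sum_apply]
    refine Finset.sum_congr rfl fun k _ ↦ ?_
    simp [Finset.sum_apply, part, Pi.single_apply, smul_eq_C_mul, mul_assoc]
  have hFsum : ∑ i ∈ Finset.univ ×ˢ Finset.range n, part i = F := by
    simpa [sum_taylor_eq] using hsum 1
  have := sum_smul_mem_of_eigenvectors (S := S) (fun G hG ↦ hS _ hα G hG) (fun i _ ↦ hpart i)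
    (hFsum ▸ hF) f
  rwa [hsum fun i ↦ f ((i.2 + 1) * α i.1)] at this

variable [CharZero K]

lemma SymClosed.centeredMonomial_support_mem (hS : SymClosed S)
    (hα : centeredMonomial m 1 α ∈ S) :
    centeredMonomial m 1 (α.support.indicator 1) ∈ S := by
  convert hS.functional_calculus_mem hα hα (fun x ↦ 2 / x) using 1
  ext1 v
  have htaylor : taylor (m v) (centeredMonomial m 1 α v) = monomial 1 (α v) := by
    simp [centeredMonomial, taylor_mul, C_mul_X_eq_monomial]
  rw [htaylor, sum_monomial_index _ _ (by simp)]
  by_cases hv : α v = 0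
  · simp [centeredMonomial, hv]
  · have : (2 / ((1 + 1) * α v) * α v : K) = 1 := by field_simp; norm_num
    simp [centeredMonomial, hv, this]

lemma SymClosed.homogeneous_part_mem (hS : SymClosed S)
    (h₁ : centeredMonomial m 1 (B.indicator 1) ∈ S) (hF : F ∈ S) (k : ℕ) :
    centeredMonomial m k (B.indicator fun v ↦ (taylor (m v) (F v)).coeff k) ∈ S := by
  convert hS.functional_calculus_mem h₁ hF (({(k : K) + 1} : Set K).indicator 1) using 1
  ext1 v
  have hk : (k : K) + 1 ≠ 0 := Nat.cast_add_one_ne_zero k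
  by_cases hv : v ∈ B
  · rw [Polynomial.sum, Finset.sum_eq_single k]
    · simp [centeredMonomial, hv]
    · intro j _ hj
      simp [hv, hj]
    · intro hk
      simp [notMem_support_iff.1 hk]
  · simp [centeredMonomial, hv, Polynomial.sum, hk.symm]

/-- The operator `G ↦ ((X - m) G)'` is invertible on polynomials, and multiplication by `α` is
its inverse followed by the symmetric product with `α (X - m)`. -/
lemma SymClosed.mem_multiplierAlgebra_of_linear_mem (hS : SymClosed S)
    (h₁ : centeredMonomial m 1 (B.indicator 1) ∈ S) (hαB : α.support ⊆ B)
    (hα : centeredMonomial m 1 α ∈ S) : α ∈ multiplierAlgebra (V → K) S := by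
  intro F hF
  convert hS _ hα _ (hS.functional_calculus_mem h₁ hF fun x ↦ x⁻¹) using 1
  ext1 v
  by_cases hv : v ∈ B
  · have hterm (k : ℕ) (a : K) :
        derivative (C (α v) * (X - C (m v)) * (C (((k : K) + 1)⁻¹ * a) * (X - C (m v)) ^ k)) =
          C (α v) * (C a * (X - C (m v)) ^ k) := by
      have := congrFun (symProd_centeredMonomial m 1 k α fun _ ↦ ((k : K) + 1)⁻¹ * a) v
      rw [add_tsub_cancel_left, add_comm 1 k, symProd_apply] at this
      simp only [centeredMonomial, pow_one, Pi.smul_apply, Pi.mul_apply, smul_eq_C_mul] at this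
      have hk : (k : K) + 1 ≠ 0 := Nat.cast_add_one_ne_zero k
      have hα : ((k + 1 : ℕ) : K) * (α v * (((k : K) + 1)⁻¹ * a)) = α v * a := by
        push_cast
        field_simp
      rw [this, ← mul_assoc, ← C_mul, hα, C_mul, mul_assoc]
    conv_lhs => rw [Pi.smul_apply', smul_eq_C_mul, ← sum_taylor_eq (F v) (m v)]
    simp only [Polynomial.sum, symProd_apply, centeredMonomial, Set.indicator_of_mem hv,
      Pi.one_apply, mul_one, pow_one, Finset.mul_sum, derivative_sum, hterm]
  · have hαv : α v = 0 := Function.notMem_support.1 fun h ↦ hv (hαB h)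
    simp [symProd_apply, centeredMonomial, hαv]

lemma SymClosed.mem_multiplierAlgebra_of_homogeneous_mem (hS : SymClosed S)
    (h₀ : centeredMonomial m 0 (B.indicator 1) ∈ S) (h₁ : centeredMonomial m 1 (B.indicator 1) ∈ S)
    (hαB : α.support ⊆ B) {k : ℕ} (hα : centeredMonomial m (k + 1) α ∈ S) :
    α ∈ multiplierAlgebra (V → K) S := by
  induction k with
  | zero => exact hS.mem_multiplierAlgebra_of_linear_mem h₁ hαB hα
  | succ k ih =>
    refine ih ?_
    convert hS.centeredMonomial_mul_mem (add_zero (k + 1 + 1)) hα h₀ using 2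
    ext v
    by_cases hv : v ∈ B
    · simp [hv]
    · simp [hv, Function.notMem_support.1 fun h ↦ hv (hαB h)]

section TopDegree

variable {Q : V → K[X]} {d : ℕ}

lemma SymClosed.rootMean_linear_mem (hS : SymClosed S)
    (hQ : ∀ k, (fun v ↦ derivative^[k] (Q v)) ∈ S) (hd : ∀ v, (Q v).natDegree ≤ d + 1) :
    centeredMonomial (fun v ↦ rootMean (Q v)) 1
      ({v | (Q v).natDegree = d + 1}.indicator 1) ∈ S := by
  have hsupport := support_topDerivative hd
  rw [← hsupport, ← Set.inter_self (Function.support _), ← Function.support_mul]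
  apply hS.centeredMonomial_support_mem
  convert S.smul_mem (2⁻¹ : K) (hS _ (hQ d) _ (hQ d)) using 1
  ext1 v
  have htop : derivative^[d + 1] (Q v) = C (topDerivative Q (d + 1) v) :=
    iterate_derivative_eq_C_of_natDegree_le (hd v)
  rw [Pi.smul_apply, eq_inv_smul_iff₀ two_ne_zero, symProd_apply, derivative_mul,
    ← Function.iterate_succ_apply' derivative, htop]
  by_cases hv : (Q v).natDegree = d + 1
  · rw [iterate_derivative_eq_mul_X_sub_C_rootMean hv, htop, centeredMonomial]
    simp only [C_mul, smul_eq_C_mul, map_ofNat]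
    ring
  · have : topDerivative Q (d + 1) v = 0 := by
      rwa [← Function.notMem_support, hsupport]
    simp [centeredMonomial, this]

lemma SymClosed.topDerivative_mem_multiplierAlgebra (hS : SymClosed S)
    (hQ : ∀ k, (fun v ↦ derivative^[k] (Q v)) ∈ S) (hd : ∀ v, (Q v).natDegree ≤ d + 1) :
    topDerivative Q (d + 1) ∈ multiplierAlgebra (V → K) S := by
  have hsupport := support_topDerivative hd
  refine hS.mem_multiplierAlgebra_of_linear_mem (hS.rootMean_linear_mem hQ hd) hsupport.subset ?_
  convert hS.homogeneous_part_mem (hS.rootMean_linear_mem hQ hd) (hQ d) 1 using 2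
  ext v
  by_cases hv : v ∈ {v | (Q v).natDegree = d + 1}
  · rw [Set.indicator_of_mem hv, iterate_derivative_eq_mul_X_sub_C_rootMean hv,
      iterate_derivative_eq_C_of_natDegree_le hv.le]
    simp [topDerivative, taylor_mul]
  · have : topDerivative Q (d + 1) v = 0 := by
      rwa [← Function.notMem_support, hsupport]
    rw [Set.indicator_of_notMem hv, this]

lemma SymClosed.indicator_natDegree_mem (hS : SymClosed S)
    (hQ : ∀ k, (fun v ↦ derivative^[k] (Q v)) ∈ S) (hd : ∀ v, (Q v).natDegree ≤ d + 1) :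
    {v | (Q v).natDegree = d + 1}.indicator 1 ∈ multiplierAlgebra (V → K) S :=
  hS.mem_multiplierAlgebra_of_linear_mem (hS.rootMean_linear_mem hQ hd) Set.support_indicator_subset
    (hS.rootMean_linear_mem hQ hd)

lemma SymClosed.centeredMonomial_zero_indicator_mem (hS : SymClosed S)
    (hQ : ∀ k, (fun v ↦ derivative^[k] (Q v)) ∈ S) (hd : ∀ v, (Q v).natDegree ≤ d + 1) :
    centeredMonomial (fun v ↦ rootMean (Q v)) 0
      ({v | (Q v).natDegree = d + 1}.indicator 1) ∈ S := by
  convert comp_mem_of_mem_subalgebra (hS.topDerivative_mem_multiplierAlgebra hQ hd) (·⁻¹) _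
    (hQ (d + 1)) using 1
  ext1 v
  rw [Pi.smul_apply', iterate_derivative_eq_C_of_natDegree_le (hd v), ← topDerivative.eq_1,
    ← support_topDerivative hd]
  by_cases hv : topDerivative Q (d + 1) v = 0
  · simp [centeredMonomial, hv]
  · simp [centeredMonomial, hv, smul_C]

lemma SymClosed.depressed_coeff_mem_multiplierAlgebra (hS : SymClosed S)
    (hQ : ∀ k, (fun v ↦ derivative^[k] (Q v)) ∈ S) (hd : ∀ v, (Q v).natDegree ≤ d + 1) (k : ℕ) :
    {v | (Q v).natDegree = d + 1}.indicator (fun v ↦ (depressed (Q v)).coeff k) ∈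
      multiplierAlgebra (V → K) S := by
  set B : Set V := {v | (Q v).natDegree = d + 1}
  set c : ℕ → V → K := fun k ↦ B.indicator fun v ↦ (depressed (Q v)).coeff k with hc
  have h₀ := hS.centeredMonomial_zero_indicator_mem hQ hd
  have h₁ := hS.rootMean_linear_mem hQ hd
  have hpart (k : ℕ) : centeredMonomial (fun v ↦ rootMean (Q v)) k (c k) ∈ S :=
    hS.homogeneous_part_mem h₁ (hQ 0) k
  have hpos (k : ℕ) : c (k + 1) ∈ multiplierAlgebra (V → K) S :=
    hS.mem_multiplierAlgebra_of_homogeneous_mem h₀ h₁ Set.support_indicator_subset (hpart (k + 1))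
  obtain _ | k := k
  · obtain _ | d := d
    · convert (multiplierAlgebra (V → K) S).zero_mem using 1
      ext v
      exact Set.indicator_apply_eq_zero.2 coeff_depressed_eq_zero
    · have hprod : c (d + 2) * c 0 ∈ multiplierAlgebra (V → K) S :=
        hS.mem_multiplierAlgebra_of_homogeneous_mem h₀ h₁
          ((Function.support_mul_subset_right _ _).trans Set.support_indicator_subset)
          (hS.centeredMonomial_mul_mem (add_zero _) (hpart (d + 2)) (hpart 0))
      convert mul_mem (comp_mem_of_mem_subalgebra (hpos (d + 1)) (·⁻¹)) hprod using 1
      ext v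
      by_cases hv : (Q v).natDegree = d + 2
      · have : (depressed (Q v)).coeff (d + 2) ≠ 0 :=
          coeff_ne_zero_of_eq_degree <|
            (degree_eq_iff_natDegree_eq_of_pos (d + 1).succ_pos).2 (by simpa using hv)
        simp [hc, B, hv, this]
      · simp [hc, B, hv]
  · exact hpos k

lemma SymClosed.indicator_depressed_mem_of_natDegree_eq (hS : SymClosed S)
    (hQ : ∀ k, (fun v ↦ derivative^[k] (Q v)) ∈ S) (hd : ∀ v, (Q v).natDegree ≤ d + 1) {v₀ : V}
    (hv₀ : (Q v₀).natDegree = d + 1) :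
    {w | depressed (Q w) = depressed (Q v₀)}.indicator 1 ∈ multiplierAlgebra (V → K) S := by
  set B : Set V := {v | (Q v).natDegree = d + 1}
  set c : ℕ → V → K := fun k ↦ B.indicator fun v ↦ (depressed (Q v)).coeff k with hc
  have hclass : {w | depressed (Q w) = depressed (Q v₀)} =
      B ∩ ⋂ k ∈ Finset.range (d + 2), {w | c k w = (depressed (Q v₀)).coeff k} := by
    ext w
    constructor
    · intro (hw : depressed (Q w) = depressed (Q v₀))
      have hwB : w ∈ B := by
        have := congrArg natDegree hw
        rwa [natDegree_depressed, natDegree_depressed, hv₀] at this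
      simp [hc, hwB, hw]
    · rintro ⟨hwB, hw⟩
      refine (ext_iff_natDegree_le (n := d + 1) ?_ ?_).2 fun k hk ↦ ?_
      · simpa using hd w
      · simpa using hd v₀
      · have := Set.mem_iInter₂.1 hw k (Finset.mem_range.2 (Nat.lt_succ_of_le hk))
        simpa [hc, hwB] using this
  rw [hclass]
  exact indicator_inter_mem (hS.indicator_natDegree_mem hQ hd) <|
    indicator_biInter_mem _ fun k _ ↦
      indicator_fiber_mem (hS.depressed_coeff_mem_multiplierAlgebra hQ hd k) _

end TopDegree

lemma SymClosed.indicator_depressed_mem_of_natDegree_le (hS : SymClosed S) (d : ℕ) {Q : V → K[X]}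
    (hQ : ∀ k, (fun v ↦ derivative^[k] (Q v)) ∈ S) (hd : ∀ v, (Q v).natDegree ≤ d)
    (hQ₀ : ∀ v, (Q v).natDegree = 0 → Q v = 0) (v₀ : V) :
    {w | depressed (Q w) = depressed (Q v₀)}.indicator 1 ∈ multiplierAlgebra (V → K) S := by
  induction d generalizing Q with
  | zero =>
    have hQ_zero (v : V) : Q v = 0 := hQ₀ v (Nat.le_zero.1 (hd v))
    simp [hQ_zero]
  | succ d ih =>
    by_cases hv₀ : (Q v₀).natDegree = d + 1
    · exact hS.indicator_depressed_mem_of_natDegree_eq hQ hd hv₀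
    set β : V → K := 1 - {v | (Q v).natDegree = d + 1}.indicator 1 with hβ
    have hβ_mem : β ∈ multiplierAlgebra (V → K) S :=
      sub_mem (one_mem _) (hS.indicator_natDegree_mem hQ hd)
    have hβ_top {v : V} (hv : (Q v).natDegree = d + 1) : β v = 0 := by simp [hβ, hv]
    have hβ_lower {v : V} (hv : (Q v).natDegree ≠ d + 1) : β v = 1 := by simp [hβ, hv]
    have hlower (v : V) : (β • Q) v = if (Q v).natDegree = d + 1 then 0 else Q v := by
      split_ifs with hv
      · rw [Pi.smul_apply', hβ_top hv, zero_smul]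
      · rw [Pi.smul_apply', hβ_lower hv, one_smul]
    have hclass := ih (Q := β • Q) ?_ ?_ ?_
    · convert mul_mem hβ_mem hclass using 1
      ext w
      by_cases hw : (Q w).natDegree = d + 1
      · have : depressed (Q w) ≠ depressed (Q v₀) := fun h ↦ hv₀ <| by
          rw [← natDegree_depressed, ← h, natDegree_depressed, hw]
        simp [hβ_top hw, this]
      · simp [hlower, hβ_lower hw, hw, hv₀, Set.indicator_apply]
    · intro k
      convert hβ_mem _ (hQ k) using 1
      ext1 v
      simp [smul_eq_C_mul, iterate_derivative_C_mul]
    · intro v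
      rw [hlower]
      split_ifs with hv
      · simp
      · exact Nat.le_of_lt_succ ((hd v).lt_of_ne hv)
    · intro v
      rw [hlower]
      split_ifs with hv
      · simp
      · exact hQ₀ v

lemma SymClosed.indicator_depressed_mem (hS : SymClosed S) {Q : V → K[X]}
    (hQ : ∀ k, (fun v ↦ derivative^[k] (Q v)) ∈ S)
    (hQ₀ : ∀ v, (Q v).natDegree = 0 → Q v = 0) (v₀ : V) :
    {w | depressed (Q w) = depressed (Q v₀)}.indicator 1 ∈ multiplierAlgebra (V → K) S := by
  have := Fintype.ofFinite V
  exact hS.indicator_depressed_mem_of_natDegree_le _ hQ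
    (fun v ↦ Finset.le_sup (f := fun v ↦ (Q v).natDegree) (Finset.mem_univ v)) hQ₀ v₀

end SymmetricProduct

lemma C_indicator_mem_of_depressed_eq {K V : Type*} [Field K] [CharZero K]
    {S : Submodule K (V → K[X])} {B : Set V} {Q : V → K[X]} {v₀ : V}
    (hQ : ∀ k, (fun v ↦ derivative^[k] (Q v)) ∈ S) (hv₀ : Q v₀ ≠ 0)
    (hB : B.indicator 1 ∈ multiplierAlgebra (V → K) S)
    (hclass : ∀ w ∈ B, depressed (Q w) = depressed (Q v₀)) :
    (fun v ↦ C (B.indicator 1 v)) ∈ S := by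
  set n := (Q v₀).natDegree
  have htop : ∀ w ∈ B, derivative^[n] (Q w) = C (n.factorial * (Q v₀).leadingCoeff) := by
    intro w hw
    have hdeg : (Q w).natDegree = n := by
      rw [← natDegree_depressed, hclass w hw, natDegree_depressed]
    have hlead : (Q w).leadingCoeff = (Q v₀).leadingCoeff := by
      simpa [depressed] using congrArg leadingCoeff (hclass w hw)
    rw [iterate_derivative_eq_C_of_natDegree_le hdeg.le, ← hlead, leadingCoeff, hdeg]
  have hne : (n.factorial : K) * (Q v₀).leadingCoeff ≠ 0 :=
    mul_ne_zero (Nat.cast_ne_zero.2 n.factorial_ne_zero) (leadingCoeff_ne_zero.2 hv₀)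
  convert S.smul_mem ((n.factorial : K) * (Q v₀).leadingCoeff)⁻¹ (hB _ (hQ n)) using 1
  ext1 v
  by_cases hv : v ∈ B
  · rw [Pi.smul_apply, Pi.smul_apply', Set.indicator_of_mem hv, Pi.one_apply, one_smul,
      htop v hv, smul_C, smul_eq_mul, inv_mul_cancel₀ hne]
  · simp [hv]

open scoped ContDiff

/-! ### Brackets of mechanical vector fields -/

section Brackets

variable {V : Type}

/-- The vector field `∑_v f_v(q) ∂_{p_v}` of a position-dependent force. -/
def kick (f : (V → ℝ) → V → ℝ) : Phase V → Phase V := fun x ↦ (0, f x.1)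

/-- The second-order vector field `∑_v p_v ∂_{q_v} + ∑_v (Φ_v(q) - γ_v p_v) ∂_{p_v}` of a force
`Φ` with linear friction. -/
def drift (γ : V → ℝ) (Φ : (V → ℝ) → V → ℝ) : Phase V → Phase V :=
  fun x ↦ (x.2, Φ x.1 - γ * x.2)

variable {γ : V → ℝ} {f g Φ : (V → ℝ) → V → ℝ}

lemma fderiv_kick [Finite V] {x : Phase V} (hf : DifferentiableAt ℝ f x.1) (u : Phase V) :
    fderiv ℝ (kick f) x u = (0, fderiv ℝ f x.1 u.1) := by
  have := Fintype.ofFinite V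
  have : HasFDerivAt (kick f) _ x :=
    (hasFDerivAt_const 0 x).prodMk (hf.hasFDerivAt.comp x hasFDerivAt_fst)
  simp [this.fderiv]

lemma fderiv_drift [Finite V] {x : Phase V} (hΦ : DifferentiableAt ℝ Φ x.1) (u : Phase V) :
    fderiv ℝ (drift γ Φ) x u = (u.2, fderiv ℝ Φ x.1 u.1 - γ * u.2) := by
  have := Fintype.ofFinite V
  have : HasFDerivAt (drift γ Φ) _ x :=
    hasFDerivAt_snd.prodMk
      ((hΦ.hasFDerivAt.comp x hasFDerivAt_fst).sub (hasFDerivAt_snd.const_mul γ))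
  simp [this.fderiv]

variable [Fintype V]

lemma contDiff_lieB {Y Z : Phase V → Phase V} (hY : ContDiff ℝ ∞ Y) (hZ : ContDiff ℝ ∞ Z) :
    ContDiff ℝ ∞ (lieB Y Z) :=
  ((hZ.fderiv_right (by simp)).clm_apply hY).sub ((hY.fderiv_right (by simp)).clm_apply hZ)

lemma contDiff_kick (hf : ContDiff ℝ ∞ f) : ContDiff ℝ ∞ (kick f) :=
  contDiff_const.prodMk (hf.comp contDiff_fst)

lemma contDiff_drift (hΦ : ContDiff ℝ ∞ Φ) : ContDiff ℝ ∞ (drift γ Φ) :=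
  contDiff_snd.prodMk ((hΦ.comp contDiff_fst).sub (contDiff_const.mul contDiff_snd))

lemma lieB_kick_drift (hf : Differentiable ℝ f) (hΦ : Differentiable ℝ Φ) :
    lieB (kick f) (drift γ Φ) =
      fun x ↦ (f x.1, -(γ * f x.1) - fderiv ℝ f x.1 x.2) := by
  ext1 x
  rw [lieB, fderiv_drift (hΦ _), fderiv_kick (hf _)]
  simp [kick, drift]

lemma lieB_lieB_kick_drift (hf : ContDiff ℝ ∞ f) (hg : ContDiff ℝ ∞ g) (hΦ : ContDiff ℝ ∞ Φ) :
    lieB (lieB (kick f) (drift γ Φ)) (kick g) =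
      kick fun q ↦ fderiv ℝ f q (g q) + fderiv ℝ g q (f q) := by
  have hbracket := lieB_kick_drift (γ := γ) (hf.differentiable (by simp))
    (hΦ.differentiable (by simp))
  have hsmooth : Differentiable ℝ (lieB (kick f) (drift γ Φ)) :=
    (contDiff_lieB (contDiff_kick hf) (contDiff_drift hΦ)).differentiable (by simp)
  have hline (x : Phase V) (u : V → ℝ) :
      fderiv ℝ (lieB (kick f) (drift γ Φ)) x (0, u) = (0, -fderiv ℝ f x.1 u) := by
    rw [← (hsmooth x).lineDeriv_eq_fderiv, hbracket]
    have hp : HasDerivAt (fun t : ℝ ↦ x.2 + t • u) u 0 := by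
      simpa using ((hasDerivAt_id (0 : ℝ)).smul_const u).const_add x.2
    have := (hasDerivAt_const (0 : ℝ) (f x.1)).prodMk
      (((fderiv ℝ f x.1).hasFDerivAt.comp_hasDerivAt 0 hp).const_sub (-(γ * f x.1)))
    simpa [lineDeriv, Function.comp_def] using this.deriv
  ext1 x
  have hbracket_x := congrFun hbracket x
  rw [lieB, fderiv_kick (hg.differentiable (by simp) _), hbracket_x]
  simp [kick, hline, add_comm]

variable [DecidableEq V]

lemma lieB_dq (c : V) (Y : Phase V → Phase V) :
    lieB (dq c) Y = fun x ↦ fderiv ℝ Y x (Pi.single c 1, 0) := by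
  have : dq c = Function.const (Phase V) (Pi.single c 1, 0) := rfl
  ext1 x
  simp [lieB, this]

lemma lieB_dq_kick (hf : Differentiable ℝ f) (c : V) :
    lieB (dq c) (kick f) = kick fun q ↦ fderiv ℝ f q (Pi.single c 1) := by
  ext1 x
  simp only [lieB_dq, fderiv_kick (hf _), kick]

lemma lieB_dq_drift (hΦ : Differentiable ℝ Φ) (c : V) :
    lieB (dq c) (drift γ Φ) = kick fun q ↦ fderiv ℝ Φ q (Pi.single c 1) := by
  ext1 x
  simp [lieB_dq, fderiv_drift (hΦ _), kick]

end Brackets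

section PolynomialForces

variable {V : Type}

/-- The force field `q ↦ (F_v(q_v))_v` of a tuple of polynomials. -/
def pinnedForce (F : V → ℝ[X]) : (V → ℝ) → V → ℝ := fun q v ↦ (F v).eval (q v)

/-- The force field `q ↦ (F_v(q_v - q_c))_v` of a tuple of polynomials. -/
def coupledForce (c : V) (F : V → ℝ[X]) : (V → ℝ) → V → ℝ := fun q v ↦ (F v).eval (q v - q c)

lemma contDiff_eval_comp {E : Type*} [NormedAddCommGroup E] [NormedSpace ℝ E] {n : ℕ∞ω}
    {g : E → ℝ} (p : ℝ[X]) (hg : ContDiff ℝ n g) : ContDiff ℝ n fun x ↦ p.eval (g x) := by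
  have := (p.contDiff_aeval (𝕜 := ℝ) n).comp hg
  simpa only [Function.comp_def, coe_aeval_eq_eval] using this

lemma hasFDerivAt_eval_comp {E : Type*} [NormedAddCommGroup E] [NormedSpace ℝ E] {g : E → ℝ}
    {g' : E →L[ℝ] ℝ} {x : E} (p : ℝ[X]) (hg : HasFDerivAt g g' x) :
    HasFDerivAt (fun y ↦ p.eval (g y)) ((derivative p).eval (g x) • g') x :=
  (p.hasDerivAt _).comp_hasFDerivAt x hg

lemma differentiable_coupledForce [Finite V] (c : V) (F : V → ℝ[X]) :
    Differentiable ℝ (coupledForce c F) := by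
  have := Fintype.ofFinite V
  exact differentiable_pi.2 fun v ↦ (F v).differentiable.comp (by fun_prop)

lemma fderiv_pinnedForce [Finite V] (F : V → ℝ[X]) (q u : V → ℝ) :
    fderiv ℝ (pinnedForce F) q u = pinnedForce (fun v ↦ derivative (F v)) q * u := by
  have := Fintype.ofFinite V
  have hcomponent (v : V) := hasFDerivAt_eval_comp (F v) (hasFDerivAt_apply (𝕜 := ℝ) v q)
  have : HasFDerivAt (pinnedForce F) _ q := hasFDerivAt_pi.2 hcomponent
  ext v
  simp [this.fderiv, pinnedForce]

lemma fderiv_coupledForce [Finite V] (c : V) (F : V → ℝ[X]) (q u : V → ℝ) :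
    fderiv ℝ (coupledForce c F) q u =
      coupledForce c (fun v ↦ derivative (F v)) q * fun v ↦ u v - u c := by
  have := Fintype.ofFinite V
  have hcomponent (v : V) := hasFDerivAt_eval_comp (F v)
    ((hasFDerivAt_apply (𝕜 := ℝ) v q).fun_sub (hasFDerivAt_apply c q))
  have : HasFDerivAt (coupledForce c F) _ q := hasFDerivAt_pi.2 hcomponent
  ext v
  simp [this.fderiv, coupledForce]

variable [Fintype V]

lemma contDiff_pinnedForce (F : V → ℝ[X]) : ContDiff ℝ ∞ (pinnedForce F) :=
  contDiff_pi.2 fun v ↦ contDiff_eval_comp (F v) (contDiff_apply ℝ ℝ v)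

lemma lieB_lieB_kick_pinnedForce {γ : V → ℝ} {Φ : (V → ℝ) → V → ℝ} (hΦ : ContDiff ℝ ∞ Φ)
    (F H : V → ℝ[X]) :
    lieB (lieB (kick (pinnedForce F)) (drift γ Φ)) (kick (pinnedForce H)) =
      kick (pinnedForce (symProd F H)) := by
  rw [lieB_lieB_kick_drift (contDiff_pinnedForce F) (contDiff_pinnedForce H) hΦ]
  congr 1
  ext q v
  simp [fderiv_pinnedForce, pinnedForce, symProd_apply, mul_comm]

end PolynomialForces

section Network

variable {V : Type} [Fintype V] {G : SimpleGraph V} [DecidableRel G.Adj]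
  {γ : V → ℝ} {U : V → ℝ → ℝ} {Vp : V → V → ℝ[X]}

variable (G U Vp) in
/-- The force exerted on the vertices by the pinning and the interaction potentials. -/
def networkForce : (V → ℝ) → V → ℝ := fun q v ↦
  -deriv (U v) (q v) - ∑ w with G.Adj v w, (derivative (Vp v w)).eval (q v - q w)

lemma X0_eq_drift [DecidableEq V] : X0 G γ U Vp = drift γ (networkForce G U Vp) := by
  ext x v
  · rfl
  · simp only [X0, drift, networkForce, Pi.sub_apply, Pi.mul_apply]
    ring

lemma contDiff_networkForce (hU : ∀ v, ContDiff ℝ ∞ (U v)) :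
    ContDiff ℝ ∞ (networkForce G U Vp) := by
  refine contDiff_pi.2 fun v ↦ (ContDiff.neg ?_).sub (ContDiff.sum fun w _ ↦ ?_)
  · exact (contDiff_infty_iff_deriv.1 (hU v)).2.comp (contDiff_apply ℝ ℝ v)
  · exact contDiff_eval_comp _ ((contDiff_apply ℝ ℝ v).sub (contDiff_apply ℝ ℝ w))

lemma fderiv_networkForce (hU : ∀ v, ContDiff ℝ ∞ (U v)) (q u : V → ℝ) (v : V) :
    fderiv ℝ (networkForce G U Vp) q u v = -(deriv (deriv (U v)) (q v) * u v) -
      ∑ w with G.Adj v w, (derivative (derivative (Vp v w))).eval (q v - q w) * (u v - u w) := by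
  have hU'' (v : V) : HasDerivAt (deriv (U v)) (deriv (deriv (U v)) (q v)) (q v) :=
    ((contDiff_infty_iff_deriv.1 (hU v)).2.differentiable (by simp) _).hasDerivAt
  have hVp (v w : V) := hasFDerivAt_eval_comp (derivative (Vp v w))
    ((hasFDerivAt_apply (𝕜 := ℝ) v q).fun_sub (hasFDerivAt_apply w q))
  have hcomponent (v : V) := ((hU'' v).comp_hasFDerivAt q (hasFDerivAt_apply v q)).neg.sub
    (HasFDerivAt.fun_sum (u := Finset.univ.filter (G.Adj v)) fun w _ ↦ hVp v w)
  have : HasFDerivAt (networkForce G U Vp) _ q := hasFDerivAt_pi.2 hcomponent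
  simp [this.fderiv]

end Network

/-! ### The space of polynomial tuples in `𝓜` -/

section Membership

variable {V : Type} [Fintype V] [DecidableEq V] {Vstar : Finset V} {X₀ : Phase V → Phase V}

lemma MM.zero {Y : Phase V → Phase V} (hY : MM Vstar X₀ Y) : MM Vstar X₀ 0 := by
  simpa using hY.smul 0

lemma MM.sum {ι : Type*} {s : Finset ι} {Y : ι → Phase V → Phase V} (h₀ : MM Vstar X₀ 0)
    (hY : ∀ i ∈ s, MM Vstar X₀ (Y i)) : MM Vstar X₀ (∑ i ∈ s, Y i) := by
  induction s using Finset.induction_on with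
  | empty => simpa using h₀
  | insert i s hi ih =>
    rw [Finset.sum_insert hi]
    exact (hY i (by simp)).add (ih fun j hj ↦ hY j (by simp [hj]))

/-- The submodule of tuples `F` of polynomials with `∑_v F_v(q_v) ∂_{p_v} ∈ 𝓜`. It needs `0 ∈ 𝓜`,
which fails for `V* = ∅`. -/
def pinnedForceSubmodule (h₀ : MM Vstar X₀ 0) : Submodule ℝ (V → ℝ[X]) where
  carrier := {F | MM Vstar X₀ (kick (pinnedForce F))}
  zero_mem' := by
    change MM Vstar X₀ (kick (pinnedForce 0))
    convert h₀ using 1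
    ext x v <;> simp [kick, pinnedForce]
  add_mem' {F H} hF hH := by
    change MM Vstar X₀ (kick (pinnedForce (F + H)))
    convert MM.add hF hH using 1
    ext x v <;> simp [kick, pinnedForce]
  smul_mem' a F hF := by
    change MM Vstar X₀ (kick (pinnedForce (a • F)))
    convert MM.smul a hF using 1
    ext x v <;> simp [kick, pinnedForce]

lemma MM.kick_compl_indicator {f : (V → ℝ) → V → ℝ} (hf : ContDiff ℝ ∞ f)
    (hkick : MM Vstar X₀ (kick f)) {C : Finset V} (hC : ∀ v ∈ C, MM Vstar X₀ (dp v)) :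
    MM Vstar X₀ (kick fun q v ↦ if v ∈ C then 0 else f q v) := by
  have hcomponent (v : V) (hv : v ∈ C) : MM Vstar X₀ fun x ↦ (-f x.1 v) • dp v x :=
    MM.mulS _ ((contDiff_pi.1 (hf.comp contDiff_fst) v).neg) (hC v hv)
  convert hkick.add (MM.sum hkick.zero hcomponent) using 1
  ext x v
  · simp [kick, dp, Finset.sum_apply, Prod.fst_sum]
  · by_cases hv : v ∈ C <;>
      simp [kick, dp, Finset.sum_apply, Prod.snd_sum, Pi.single_apply, hv]

/-- Elimination of `q_c`: by Taylor's formula `F_v(q_v) = ∑_k q_c^k / k! · F_v^{(k)}(q_v - q_c)`,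
and `𝓜` is closed under multiplication by the smooth functions `q_c^k / k!`. -/
lemma MM.kick_pinnedForce_of_coupledForce {c : V} {F : V → ℝ[X]}
    (hF : ∀ k, MM Vstar X₀ (kick (coupledForce c fun v ↦ derivative^[k] (F v)))) :
    MM Vstar X₀ (kick (pinnedForce F)) := by
  set n := Finset.univ.sup fun v ↦ (F v).natDegree
  have hn (v : V) : (F v).natDegree < n + 1 :=
    Nat.lt_succ_of_le (Finset.le_sup (f := fun v ↦ (F v).natDegree) (Finset.mem_univ v))
  have hterm (k : ℕ) : MM Vstar X₀ fun x ↦ ((k.factorial : ℝ)⁻¹ * x.1 c ^ k) •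
      kick (coupledForce c fun v ↦ derivative^[k] (F v)) x :=
    MM.mulS _ (by fun_prop) (hF k)
  have htaylor (v : V) (a b : ℝ) : (F v).eval a =
      ∑ k ∈ Finset.range (n + 1),
        (k.factorial : ℝ)⁻¹ * b ^ k * (derivative^[k] (F v)).eval (a - b) := by
    have hshift : (F v).eval a = (taylor (a - b) (F v)).eval b := by simp [taylor_eval]
    rw [hshift, eval_eq_sum_range' ((natDegree_taylor _ _).trans_lt (hn v))]
    refine Finset.sum_congr rfl fun k _ ↦ ?_
    rw [taylor_coeff, ← factorial_smul_hasseDeriv, LinearMap.smul_apply, eval_smul, nsmul_eq_mul]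
    field_simp
  convert MM.sum (s := Finset.range (n + 1)) (hF 0).zero fun k _ ↦ hterm k using 1
  ext x v
  · simp [kick, Finset.sum_apply, Prod.fst_sum]
  · simpa [kick, pinnedForce, coupledForce, Finset.sum_apply, Prod.snd_sum]
      using htaylor v (x.1 v) (x.1 c)

end Membership

section Boundary

variable {V : Type} {G : SimpleGraph V} {γ : V → ℝ} {U : V → ℝ → ℝ} {Vp : V → V → ℝ[X]}
  {C : Finset V} {c : V}

variable (G Vp C c) in
/-- The tuple of the polynomials `V''_{vc}` at the neighbours `v ∉ C` of `c`, zero at all other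
vertices: the effect of moving `q_c` on the vertices outside `C`. -/
def boundaryHessian [DecidableEq V] [DecidableRel G.Adj] : V → ℝ[X] := fun v ↦
  if v ∉ C ∧ G.Adj c v then derivative (derivative (Vp v c)) else 0

variable [Fintype V] [DecidableEq V] [DecidableRel G.Adj] {Vstar : Finset V}

lemma symClosed_pinnedForceSubmodule (hU : ∀ v, ContDiff ℝ ∞ (U v))
    (h₀ : MM Vstar (X0 G γ U Vp) 0) : SymClosed (pinnedForceSubmodule h₀) := by
  intro F hF H hH
  have hbracket := (MM.lieX hF).lie hH
  nth_rewrite 2 [X0_eq_drift] at hbracket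
  rwa [lieB_lieB_kick_pinnedForce (contDiff_networkForce hU)] at hbracket

lemma MM.kick_coupledForce_boundaryHessian (hU : ∀ v, ContDiff ℝ ∞ (U v))
    (hC : ∀ c ∈ C, Controllable Vstar (X0 G γ U Vp) c) (hc : c ∈ C) (k : ℕ) :
    MM Vstar (X0 G γ U Vp)
      (kick (coupledForce c fun v ↦ derivative^[k] (boundaryHessian G Vp C c v))) := by
  induction k with
  | zero =>
    have hforce := contDiff_networkForce (G := G) (Vp := Vp) hU
    have hbracket := (hC c hc).1.lieX
    nth_rewrite 2 [X0_eq_drift] at hbracket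
    rw [lieB_dq_drift (hforce.differentiable (by simp))] at hbracket
    convert hbracket.kick_compl_indicator
      ((hforce.fderiv_right (by simp)).clm_apply contDiff_const) (fun v hv ↦ (hC v hv).2) using 2
    ext q v
    by_cases hv : v ∈ C
    · simp [coupledForce, boundaryHessian, hv]
    · have hvc : v ≠ c := fun h ↦ hv (h ▸ hc)
      by_cases hadj : G.Adj c v <;>
        simp [fderiv_networkForce hU, coupledForce, boundaryHessian, hv, hvc, hadj,
          Pi.single_apply, G.adj_comm v c]
  | succ k ih =>
    have hderiv := ((hC c hc).1.lie ih).smul (-1)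
    rw [lieB_dq_kick (differentiable_coupledForce _ _)] at hderiv
    convert hderiv using 1
    ext x v
    · simp [kick]
    · by_cases hv : v = c
      · subst hv
        simp [kick, fderiv_coupledForce, coupledForce, boundaryHessian]
      · simp [kick, fderiv_coupledForce, coupledForce, hv, Function.iterate_succ_apply']

lemma iterate_derivative_boundaryHessian_mem (hU : ∀ v, ContDiff ℝ ∞ (U v))
    (h₀ : MM Vstar (X0 G γ U Vp) 0)
    (hC : ∀ c ∈ C, Controllable Vstar (X0 G γ U Vp) c) (hc : c ∈ C) (k : ℕ) :
    (fun v ↦ derivative^[k] (boundaryHessian G Vp C c v)) ∈ pinnedForceSubmodule h₀ :=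
  MM.kick_pinnedForce_of_coupledForce fun j ↦ by
    simpa only [← Function.iterate_add_apply]
      using MM.kick_coupledForce_boundaryHessian hU hC hc (j + k)

end Boundary

/-! ### Equivalence classes at the boundary of `C` -/

section PolyEquiv

variable {p q : ℝ[X]}

lemma polyEquiv_iff_depressed_eq : PolyEquiv p q ↔ depressed p = depressed q := by
  rw [depressed_eq_depressed_iff]
  refine exists_congr fun δ ↦ ⟨fun h ↦ Polynomial.funext fun x ↦ ?_, fun h x ↦ ?_⟩
  · rw [h, taylor_eval]
  · rw [h, taylor_eval]

lemma PolyEquiv.comp_neg_X (h : PolyEquiv p q) : PolyEquiv (p.comp (-X)) (q.comp (-X)) := by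
  obtain ⟨δ, hδ⟩ := h
  refine ⟨-δ, fun x ↦ ?_⟩
  simp [hδ, add_comm]

lemma polyEquiv_comp_neg_X : PolyEquiv (p.comp (-X)) (q.comp (-X)) ↔ PolyEquiv p q :=
  ⟨fun h ↦ by simpa [comp_assoc] using h.comp_neg_X, PolyEquiv.comp_neg_X⟩

lemma derivative_derivative_eq_comp_neg_X (h : ∀ x, p.eval x = q.eval (-x)) :
    derivative (derivative p) = (derivative (derivative q)).comp (-X) := by
  have hp : p = q.comp (-X) := Polynomial.funext fun x ↦ by simp [h]
  simp [hp, derivative_comp]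

end PolyEquiv

section Classes

variable {V : Type} [DecidableEq V] {G : SimpleGraph V} [DecidableRel G.Adj]
  {Vp : V → V → ℝ[X]} {C : Finset V} {c v w : V}

lemma natDegree_boundaryHessian_ne_zero (hdeg : ∀ v ∉ C, G.Adj c v → 3 ≤ (Vp v c).natDegree)
    (hv : v ∉ C) (hcv : G.Adj c v) : (boundaryHessian G Vp C c v).natDegree ≠ 0 := by
  have := hdeg v hv hcv
  rw [boundaryHessian, if_pos ⟨hv, hcv⟩, natDegree_derivative, natDegree_derivative]
  omega

lemma boundaryHessian_eq_zero_of_natDegree_eq_zero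
    (hdeg : ∀ v ∉ C, G.Adj c v → 3 ≤ (Vp v c).natDegree)
    (h : (boundaryHessian G Vp C c v).natDegree = 0) : boundaryHessian G Vp C c v = 0 :=
  if_neg fun hv ↦ natDegree_boundaryHessian_ne_zero hdeg hv.1 hv.2 h

lemma boundaryHessian_eq_zero_iff (hdeg : ∀ v ∉ C, G.Adj c v → 3 ≤ (Vp v c).natDegree) :
    boundaryHessian G Vp C c v = 0 ↔ ¬(v ∉ C ∧ G.Adj c v) :=
  ⟨fun h hv ↦ natDegree_boundaryHessian_ne_zero hdeg hv.1 hv.2 (by simp [h]), fun h ↦ if_neg h⟩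

lemma depressed_boundaryHessian_eq_iff
    (hsym : ∀ u v, G.Adj u v → ∀ x : ℝ, (Vp v u).eval x = (Vp u v).eval (-x))
    (hdeg : ∀ v ∉ C, G.Adj c v → 3 ≤ (Vp v c).natDegree) (hw : w ∉ C) (hv : v ∉ C) :
    depressed (boundaryHessian G Vp C c w) = depressed (boundaryHessian G Vp C c v) ↔
      (G.Adj c w ↔ G.Adj c v) ∧ (G.Adj c w → G.Adj c v →
        PolyEquiv (derivative (derivative (Vp c w))) (derivative (derivative (Vp c v)))) := by
  have hzero {u : V} (hu : u ∉ C) :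
      depressed (boundaryHessian G Vp C c u) = 0 ↔ ¬G.Adj c u := by
    simp [depressed_eq_zero_iff, boundaryHessian_eq_zero_iff hdeg, hu]
  by_cases hcw : G.Adj c w <;> by_cases hcv : G.Adj c v
  · simp only [boundaryHessian, hw, hv, hcw, hcv, not_false_eq_true, and_self, if_true,
      true_imp_iff, true_and, ← polyEquiv_iff_depressed_eq,
      derivative_derivative_eq_comp_neg_X (hsym c _ hcw),
      derivative_derivative_eq_comp_neg_X (hsym c _ hcv), polyEquiv_comp_neg_X]
  · simpa [hcw, hcv, (hzero hv).2 hcv] using mt (hzero hw).1 (not_not.2 hcw)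
  · simpa [hcw, hcv, (hzero hw).2 hcw, eq_comm] using mt (hzero hv).1 (not_not.2 hcv)
  · simp [hcw, hcv, (hzero hw).2 hcw, (hzero hv).2 hcv]

lemma mem_NC [Fintype V] : v ∈ NC G C ↔ v ∉ C ∧ ∃ c ∈ C, G.Adj c v := by simp [NC]

lemma coe_CEquiv_class_eq_biInter [Fintype V]
    (hsym : ∀ u v, G.Adj u v → ∀ x : ℝ, (Vp v u).eval x = (Vp u v).eval (-x))
    (hdeg : ∀ c ∈ C, ∀ v ∉ C, G.Adj c v → 3 ≤ (Vp v c).natDegree) (hv : v ∈ NC G C) :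
    (((NC G C).filter fun w ↦ CEquiv G Vp C w v : Finset V) : Set V) =
      ⋂ c ∈ C, {w | depressed (boundaryHessian G Vp C c w) =
        depressed (boundaryHessian G Vp C c v)} := by
  obtain ⟨hvC, c₀, hc₀, hadj⟩ := mem_NC.1 hv
  ext w
  simp only [Finset.coe_filter, Set.mem_ofPred_eq, Set.mem_iInter]
  constructor
  · rintro ⟨hw, hsib, hequiv⟩ c hc
    exact (depressed_boundaryHessian_eq_iff hsym (hdeg c hc) (mem_NC.1 hw).1 hvC).2
      ⟨hsib c hc, hequiv c hc⟩
  · intro h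
    have hw₀ : w ∉ C ∧ G.Adj c₀ w := by
      by_contra hw
      have := h c₀ hc₀
      rw [(boundaryHessian_eq_zero_iff (hdeg c₀ hc₀)).2 hw, eq_comm,
        depressed_eq_zero_iff.2 rfl, depressed_eq_zero_iff,
        boundaryHessian_eq_zero_iff (hdeg c₀ hc₀)] at this
      exact this ⟨hvC, hadj⟩
    have hclass (c : V) (hc : c ∈ C) :=
      (depressed_boundaryHessian_eq_iff hsym (hdeg c hc) hw₀.1 hvC).1 (h c hc)
    exact ⟨mem_NC.2 ⟨hw₀.1, c₀, hc₀, hw₀.2⟩, fun c hc ↦ (hclass c hc).1,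
      fun c hc ↦ (hclass c hc).2⟩

lemma kick_pinnedForce_C_indicator [Fintype V] (A : Finset V) :
    kick (pinnedForce fun v ↦ Polynomial.C ((A : Set V).indicator 1 v)) = dpSum A := by
  ext x v
  · rfl
  · by_cases hv : v ∈ A <;>
      simp [kick, pinnedForce, dpSum, Finset.sum_apply, Pi.single_apply, hv]

end Classes

theorem CEquiv_class_jointly_controllable_general
    {V : Type} [Fintype V] [DecidableEq V] (G : SimpleGraph V) [DecidableRel G.Adj]
    (Vstar : Finset V) (γ : V → ℝ) (U : V → ℝ → ℝ) (Vp : V → V → Polynomial ℝ)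
    (hU : ∀ v, ContDiff ℝ (⊤ : ℕ∞) (U v))
    (hsym : ∀ u v, G.Adj u v → ∀ x : ℝ, (Vp v u).eval x = (Vp u v).eval (-x))
    (C : Finset V) (hdeg : ∀ c ∈ C, ∀ v ∉ C, G.Adj c v → 3 ≤ (Vp v c).natDegree)
    (hC : ∀ c ∈ C, Controllable Vstar (X0 G γ U Vp) c) :
    ∀ v₀ ∈ NC G C,
      MM Vstar (X0 G γ U Vp)
        (dpSum ((NC G C).filter fun w ↦ CEquiv G Vp C w v₀)) := by
  intro v₀ hv₀
  obtain ⟨hv₀C, c₀, hc₀, hadj⟩ := mem_NC.1 hv₀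
  have h₀ := (hC c₀ hc₀).2.zero
  have hderiv (c : V) (hc : c ∈ C) := iterate_derivative_boundaryHessian_mem hU h₀ hC hc
  have hS : SymClosed (pinnedForceSubmodule h₀) := symClosed_pinnedForceSubmodule hU h₀
  have hclass := coe_CEquiv_class_eq_biInter hsym hdeg hv₀
  have hmultiplier : (((NC G C).filter fun w ↦ CEquiv G Vp C w v₀ : Finset V) : Set V).indicator 1 ∈
      multiplierAlgebra (V → ℝ) (pinnedForceSubmodule h₀) :=
    hclass ▸ indicator_biInter_mem C fun c hc ↦ hS.indicator_depressed_mem (hderiv c hc)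
      (fun _ ↦ boundaryHessian_eq_zero_of_natDegree_eq_zero (hdeg c hc)) v₀
  rw [← kick_pinnedForce_C_indicator]
  refine C_indicator_mem_of_depressed_eq (v₀ := v₀) (hderiv c₀ hc₀) ?_ hmultiplier ?_
  · exact fun h ↦ (boundaryHessian_eq_zero_iff (hdeg c₀ hc₀)).1 h ⟨hv₀C, hadj⟩
  · exact fun w hw ↦ Set.mem_iInter₂.1 (hclass ▸ hw) c₀ hc₀

/-- Proposition 5.4. Let `C` be a set of controllable vertices.
Then every `C`-equivalence class `U ⊆ N(C)` (the class of some `v₀ ∈ N(C)`) is jointly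
controllable: `∑_{v∈U} ∂_{p_v} ∈ 𝓜`. -/
theorem CEquiv_class_jointly_controllable
    {V : Type} [Fintype V] [DecidableEq V] (G : SimpleGraph V) [DecidableRel G.Adj]
    (Vstar : Finset V) (γ : V → ℝ) (U : V → ℝ → ℝ) (Vp : V → V → Polynomial ℝ)
    (hγpos : ∀ v ∈ Vstar, 0 < γ v) (hγ0 : ∀ v ∉ Vstar, γ v = 0)
    (hU : ∀ v, ContDiff ℝ (⊤ : ℕ∞) (U v))
    (hsym : ∀ u v, G.Adj u v → ∀ x : ℝ, (Vp v u).eval x = (Vp u v).eval (-x))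
    (hdeg : ∀ u v, G.Adj u v → 3 ≤ (Vp u v).natDegree)
    (C : Finset V) (hC : ∀ c ∈ C, Controllable Vstar (X0 G γ U Vp) c) :
    ∀ v₀ ∈ NC G C,
      MM Vstar (X0 G γ U Vp)
        (dpSum ((NC G C).filter fun w => CEquiv G Vp C w v₀)) :=
  CEquiv_class_jointly_controllable_general G Vstar γ U Vp hU hsym C
    (fun _ _ _ _ h ↦ hdeg _ _ h.symm) hC
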